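/- Let G be a finite undirected multigraph and let {v₁,...,vₘ} be a 3-edge-connected equivalence class of G containing m vertices. Then one can select m−1 short 3-weakly closed ttrails s₁,...,s_{m−1} between these vertices so that: (1) all the vertices v₁,...,vₘ are pairwise connected by these ttrails and/or by their concatenations; and (2) for any two distinct 3-edge-connected vertices v_i and v_j connected by some s_r, there exist two other ttrails p₁ and p₂ between v_i and v_j such that s_r, p₁ and p₂ are pairwise edge-disjoint. -/

import Mathlib

open Finset

/-- A finite undirected multigraph: each edge `e : E` has an unordered pair of
endpoints `ends e : Sym2 V`.  Loops and parallel edges are allowed and the graph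
need not be connected. -/
structure Multigraph (V E : Type*) where
  ends : E → Sym2 V

namespace Multigraph

variable {V E : Type*}

/-- `G.IsChain x y p` : `p` is an alternating sequence `v₁,e₁,…,vₙ,eₙ` (encoded as a
list of vertex-edge pairs) which forms a walk from `x` to `y` (the final vertex `y`
is omitted, i.e. this is "truncated"). -/
def IsChain (G : Multigraph V E) : V → V → List (V × E) → Prop
  | x, y, [] => x = y
  | x, y, (v, e) :: rest => v = x ∧ ∃ w, G.ends e = s(x, w) ∧ G.IsChain w y rest

/-- A truncated trail (ttrail) from `x` to `y`: an alternating walk with no repeated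
edges, final vertex omitted. -/
def IsTtrail (G : Multigraph V E) (x y : V) (p : List (V × E)) : Prop :=
  G.IsChain x y p ∧ (p.map Prod.snd).Nodup

/-- A cycle: a closed ttrail with no repeated vertices. -/
def IsCycle (G : Multigraph V E) (x : V) (p : List (V × E)) : Prop :=
  G.IsTtrail x x p ∧ (p.map Prod.fst).Nodup

/-- Two ttrails are edge-disjoint if they have no common edges. -/
def EdgeDisjoint (p q : List (V × E)) : Prop :=
  ∀ e, e ∈ p.map Prod.snd → e ∉ q.map Prod.snd

/-- `k`-edge-connectivity: two distinct vertices are `k`-edge-connected if there are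
`k` pairwise edge-disjoint ttrails between them; every vertex is `k`-edge-connected
to itself. -/
def KConn (G : Multigraph V E) (k : ℕ) (v w : V) : Prop :=
  v = w ∨ ∃ p : Fin k → List (V × E),
    (∀ i, G.IsTtrail v w (p i)) ∧ ∀ i j, i ≠ j → EdgeDisjoint (p i) (p j)

/-- `conk G k` : the number of equivalence classes of `k`-edge-connected vertices. -/
noncomputable def conk (G : Multigraph V E) (k : ℕ) : ℕ :=
  Nat.card (Quotient (Relation.EqvGen.setoid (G.KConn k)))

/-- The number of connected components of `G`. -/
noncomputable def con (G : Multigraph V E) : ℕ := G.conk 1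

section Homology

variable [Fintype V] [Fintype E] [DecidableEq V] [DecidableEq E]

/-- The vector in `F₂^V` which is the sum of the two endpoints of the edge `e`
(so a loop is sent to `0`). -/
def edgeVec (G : Multigraph V E) (e : E) : V → ZMod 2 := fun v =>
  Sym2.lift ⟨fun a b => (if v = a then (1 : ZMod 2) else 0) + (if v = b then 1 else 0),
    fun _ _ => add_comm _ _⟩ (G.ends e)

/-- The boundary map `δ : F₂^E → F₂^V`, sending each edge to the sum of its two
adjacent vertices. -/
def boundary (G : Multigraph V E) : (E → ZMod 2) →ₗ[ZMod 2] (V → ZMod 2) where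
  toFun c := fun v => ∑ e, c e * G.edgeVec e v
  map_add' c d := by
    funext v
    simp [add_mul, Finset.sum_add_distrib]
  map_smul' r c := by
    funext v
    simp [Finset.mul_sum, mul_assoc]

/-- The Cycle Space of `G` : the kernel of the boundary map. -/
def cycleSpace (G : Multigraph V E) : Submodule (ZMod 2) (E → ZMod 2) :=
  LinearMap.ker G.boundary

/-- The indicator vector of a vertex in `F₂^V`. -/
def vert (v : V) : V → ZMod 2 := fun w => if w = v then 1 else 0

/-- A `k`-weak homological cycle: a homological path between two `k`-edge-connected
vertices. -/
def IsWeakCycle (G : Multigraph V E) (k : ℕ) (c : E → ZMod 2) : Prop :=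
  ∃ v w, G.KConn k v w ∧ G.boundary c = vert v + vert w

/-- The `k`-Weak Cycle Space: the span of all `k`-weak homological cycles. -/
def weakCycleSpace (G : Multigraph V E) (k : ℕ) : Submodule (ZMod 2) (E → ZMod 2) :=
  Submodule.span (ZMod 2) {c | G.IsWeakCycle k c}

/-- `eps p` : the set of edges of the ttrail `p`, as a vector in `F₂^E`. -/
def eps (p : List (V × E)) : E → ZMod 2 := fun e => if e ∈ p.map Prod.snd then 1 else 0

/-- The `F₂`-linear extension of `f : E → A` to subsets of `E`: the sum of `f` over
the edges of the subset `S`. -/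
def fSum {A : Type*} [AddCommGroup A] (f : E → A) (S : E → ZMod 2) : A :=
  ∑ e ∈ Finset.univ.filter fun e => S e = 1, f e

end Homology

section Balanced

variable {A : Type*} [AddCommGroup A]

/-- The sum `g(v₁)+f(e₁)+…+g(vₙ)+f(eₙ)` of the values of a vertex-function `g` and an
edge-function `f` along a ttrail `v₁,e₁,…,vₙ,eₙ`. -/
def pathSum (g : V → A) (f : E → A) (p : List (V × E)) : A :=
  (p.map fun ve => g ve.1 + f ve.2).sum

/-- The sum `h(v₁)+h(e₁)+…+h(vₙ)+h(eₙ)` of the values of `h : V ∪ E → A` along a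
ttrail `v₁,e₁,…,vₙ,eₙ`. -/
def wSum (h : V ⊕ E → A) (p : List (V × E)) : A :=
  (p.map fun ve => h (Sum.inl ve.1) + h (Sum.inr ve.2)).sum

lemma pathSum_cons (g : V → A) (f : E → A) (a : V × E) (t : List (V × E)) :
    pathSum g f (a :: t) = (g a.1 + f a.2) + pathSum g f t := by
  simp [pathSum]

lemma pathSum_zero (p : List (V × E)) : pathSum (0 : V → A) (0 : E → A) p = 0 := by
  induction p with
  | nil => simp [pathSum]
  | cons a t ih => simp [pathSum_cons, ih]

lemma pathSum_add (g g' : V → A) (f f' : E → A) (p : List (V × E)) :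
    pathSum (g + g') (f + f') p = pathSum g f p + pathSum g' f' p := by
  induction p with
  | nil => simp [pathSum]
  | cons a t ih => simp only [pathSum_cons, Pi.add_apply, ih]; abel

lemma pathSum_neg (g : V → A) (f : E → A) (p : List (V × E)) :
    pathSum (-g) (-f) p = -pathSum g f p := by
  induction p with
  | nil => simp [pathSum]
  | cons a t ih => simp only [pathSum_cons, Pi.neg_apply, ih]; abel

lemma wSum_cons (h : V ⊕ E → A) (a : V × E) (t : List (V × E)) :
    wSum h (a :: t) = (h (Sum.inl a.1) + h (Sum.inr a.2)) + wSum h t := by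
  simp [wSum]

lemma wSum_zero (p : List (V × E)) : wSum (0 : V ⊕ E → A) p = 0 := by
  induction p with
  | nil => simp [wSum]
  | cons a t ih => simp [wSum_cons, ih]

lemma wSum_add (h h' : V ⊕ E → A) (p : List (V × E)) :
    wSum (h + h') p = wSum h p + wSum h' p := by
  induction p with
  | nil => simp [wSum]
  | cons a t ih => simp only [wSum_cons, Pi.add_apply, ih]; abel

lemma wSum_neg (h : V ⊕ E → A) (p : List (V × E)) :
    wSum (-h) p = -wSum h p := by
  induction p with
  | nil => simp [wSum]
  | cons a t ih => simp only [wSum_cons, Pi.neg_apply, ih]; abel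

/-- A function `f : E → A` is balanced if the sum of its values along every closed
ttrail of `G` is zero. -/
def BalancedE (G : Multigraph V E) (f : E → A) : Prop :=
  ∀ x p, G.IsTtrail x x p → pathSum (0 : V → A) f p = 0

/-- A function `g : V → A` is balanceable if some `f : E → A` balances it, i.e. the
sum of the values of `g` and `f` along every closed ttrail of `G` is zero. -/
def Balanceable (G : Multigraph V E) (g : V → A) : Prop :=
  ∃ f : E → A, ∀ x p, G.IsTtrail x x p → pathSum g f p = 0

/-- A function `h : V ∪ E → A` is balanced if the sum of its values along every
closed ttrail of `G` is zero. -/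
def BalancedW (G : Multigraph V E) (h : V ⊕ E → A) : Prop :=
  ∀ x p, G.IsTtrail x x p → wSum h p = 0

/-- `H(E,A)` : the group of balanced functions from `E` to `A`. -/
def Hgroup (G : Multigraph V E) (A : Type*) [AddCommGroup A] : AddSubgroup (E → A) where
  carrier := {f | G.BalancedE f}
  zero_mem' := fun _ p _ => pathSum_zero p
  add_mem' := by
    intro f f' hf hf' x p hp
    have h := pathSum_add (0 : V → A) 0 f f' p
    rw [add_zero] at h
    rw [h, hf x p hp, hf' x p hp, add_zero]
  neg_mem' := by
    intro f hf x p hp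
    have h := pathSum_neg (0 : V → A) f p
    rw [neg_zero] at h
    rw [h, hf x p hp, neg_zero]

/-- `B(V,A)` : the group of balanceable functions from `V` to `A`. -/
def Bgroup (G : Multigraph V E) (A : Type*) [AddCommGroup A] : AddSubgroup (V → A) where
  carrier := {g | G.Balanceable g}
  zero_mem' := ⟨0, fun _ p _ => pathSum_zero p⟩
  add_mem' := by
    rintro g g' ⟨f, hf⟩ ⟨f', hf'⟩
    exact ⟨f + f', fun x p hp => by rw [pathSum_add, hf x p hp, hf' x p hp, add_zero]⟩
  neg_mem' := by
    rintro g ⟨f, hf⟩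
    exact ⟨-f, fun x p hp => by rw [pathSum_neg, hf x p hp, neg_zero]⟩

/-- `W(V ∪ E, A)` : the group of balanced functions from `V ∪ E` to `A`. -/
def Wgroup (G : Multigraph V E) (A : Type*) [AddCommGroup A] : AddSubgroup (V ⊕ E → A) where
  carrier := {h | G.BalancedW h}
  zero_mem' := fun _ p _ => wSum_zero p
  add_mem' := by
    intro h h' hh hh' x p hp
    rw [wSum_add, hh x p hp, hh' x p hp, add_zero]
  neg_mem' := by
    intro h hh x p hp
    rw [wSum_neg, hh x p hp, neg_zero]

end Balanced

/-- A `3`-weakly closed ttrail (a ttrail between `3`-edge-connected vertices) which is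
short: no inner vertex is `3`-edge-connected to the initial vertex. -/
def ShortW (G : Multigraph V E) (x y : V) (p : List (V × E)) : Prop :=
  G.IsTtrail x y p ∧ G.KConn 3 x y ∧ ∀ v ∈ (p.map Prod.fst).tail, ¬ G.KConn 3 v x

/-- `G.ShortChain x y L` : `L` is a list of nontrivial short `3`-weakly closed ttrails
which concatenate into a ttrail from `x` to `y`. -/
def ShortChain (G : Multigraph V E) : V → V → List (List (V × E)) → Prop
  | x, y, [] => x = y
  | x, y, s :: rest => s ≠ [] ∧ ∃ z, G.ShortW x z s ∧ G.ShortChain z y rest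

/-- `A₂` : the subgroup of elements of order dividing `2` in `A`. -/
def torsion2 (A : Type*) [AddCommGroup A] : AddSubgroup A where
  carrier := {a | 2 • a = 0}
  zero_mem' := by simp
  add_mem' := by
    intro a b ha hb
    simp only [Set.mem_setOf_eq] at *
    rw [smul_add, ha, hb, add_zero]
  neg_mem' := by
    intro a ha
    simp only [Set.mem_setOf_eq] at *
    rw [smul_neg, ha, neg_zero]

/-- `2A` : the image of the doubling map `a ↦ 2a`. -/
def double2 (A : Type*) [AddCommGroup A] : AddSubgroup A where
  carrier := {b | ∃ a, b = 2 • a}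
  zero_mem' := ⟨0, by simp⟩
  add_mem' := by
    rintro a b ⟨x, rfl⟩ ⟨y, rfl⟩
    exact ⟨x + y, by rw [smul_add]⟩
  neg_mem' := by
    rintro a ⟨x, rfl⟩
    exact ⟨-x, by rw [smul_neg]⟩

end Multigraph


namespace Multigraph

set_option linter.unusedSectionVars false
set_option linter.unusedFintypeInType false
set_option linter.unusedDecidableInType false

variable {V E : Type*} [Fintype V] [Fintype E] [DecidableEq V] [DecidableEq E]

/-- `e` joins `X` to its complement. -/
def Crs (G : Multigraph V E) (X : Finset V) (e : E) : Prop :=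
  ∃ x y, G.ends e = s(x, y) ∧ x ∈ X ∧ y ∉ X

lemma crs_iff (G : Multigraph V E) (X : Finset V) (e : E) {x y : V} (h : G.ends e = s(x, y)) :
    G.Crs X e ↔ ¬ (x ∈ X ↔ y ∈ X) := by
  unfold Crs
  constructor
  · rintro ⟨a, b, hab, ha, hb⟩
    rw [h] at hab
    rcases Sym2.eq_iff.mp hab with ⟨rfl, rfl⟩ | ⟨rfl, rfl⟩ <;> tauto
  · intro hx
    by_cases hx1 : x ∈ X
    · exact ⟨x, y, h, hx1, by tauto⟩
    · exact ⟨y, x, by rw [h, Sym2.eq_swap], by tauto, hx1⟩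

lemma isChain_append (G : Multigraph V E) {x y : V} {p q : List (V × E)} :
    G.IsChain x y (p ++ q) ↔ ∃ z, G.IsChain x z p ∧ G.IsChain z y q := by
  induction p generalizing x with
  | nil => simp [IsChain]
  | cons a t ih =>
    obtain ⟨u, e⟩ := a
    simp only [List.cons_append, IsChain, ih]
    constructor
    · rintro ⟨h, w, h1, z, h2, h3⟩; exact ⟨z, ⟨h, w, h1, h2⟩, h3⟩
    · rintro ⟨z, ⟨h, w, h1, h2⟩, h3⟩; exact ⟨h, w, h1, z, h2, h3⟩

lemma chain_crs (G : Multigraph V E) (X : Finset V) {x y : V} {p : List (V × E)}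
    (h : G.IsChain x y p) (z : V) (hz : z = y ∨ z ∈ p.map Prod.fst)
    (hx : ¬ (x ∈ X ↔ z ∈ X)) : ∃ e ∈ p.map Prod.snd, G.Crs X e := by
  induction p generalizing x with
  | nil =>
    simp [IsChain] at h hz
    subst h; subst hz; tauto
  | cons a t ih =>
    obtain ⟨u, e⟩ := a
    obtain ⟨rfl, w, hw, hc⟩ := h
    by_cases hxw : (u ∈ X ↔ w ∈ X)
    · have hz' : z = y ∨ z ∈ t.map Prod.fst := by
        rcases hz with h | h
        · exact Or.inl h
        · simp only [List.map_cons, List.mem_cons] at h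
          rcases h with h | h
          · subst h; tauto
          · exact Or.inr h
      obtain ⟨e', he', hc'⟩ := ih hc hz' (by tauto)
      exact ⟨e', by simp only [List.map_cons, List.mem_cons]; exact Or.inr he', hc'⟩
    · exact ⟨e, by simp, (crs_iff G X e hw).2 hxw⟩

lemma chain_ends (G : Multigraph V E) (S : Finset V) {x y : V} {p : List (V × E)}
    (h : G.IsChain x y p) (hS : ∀ z, (z = y ∨ z ∈ p.map Prod.fst) → z ∈ S) :
    x ∈ S ∧ ∀ e ∈ p.map Prod.snd, ∀ u ∈ G.ends e, u ∈ S := by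
  induction p generalizing x with
  | nil => simp [IsChain] at h; subst h; simp at hS; simpa using hS
  | cons a t ih =>
    obtain ⟨u, e⟩ := a
    obtain ⟨rfl, w, hw, hc⟩ := h
    have hu : u ∈ S := hS u (Or.inr (by simp))
    obtain ⟨h1, h2⟩ := ih hc (fun z hz => hS z (by
      rcases hz with h | h
      · exact Or.inl h
      · exact Or.inr (by simp only [List.map_cons, List.mem_cons]; exact Or.inr h)))
    refine ⟨hu, ?_⟩
    intro e' he' z hz
    simp only [List.map_cons, List.mem_cons] at he'
    rcases he' with rfl | he'
    · rw [hw] at hz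
      rcases Sym2.mem_iff.mp hz with rfl | rfl <;> assumption
    · exact h2 e' he' z hz

/-- source -/
noncomputable def sr (G : Multigraph V E) (e : E) : V := (Quot.out (G.ends e)).1
/-- target -/
noncomputable def tg (G : Multigraph V E) (e : E) : V := (Quot.out (G.ends e)).2

lemma ends_eq (G : Multigraph V E) (e : E) : G.ends e = s(G.sr e, G.tg e) :=
  (Quot.out_eq (G.ends e)).symm

/-- indicator -/
def ind (x v : V) : ℤ := if v = x then 1 else 0

/-- divergence (net inflow) -/
noncomputable def dv (G : Multigraph V E) (f : E → ℤ) (v : V) : ℤ :=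
  ∑ e, f e * (ind (G.tg e) v - ind (G.sr e) v)

lemma dv_add (G : Multigraph V E) (f g : E → ℤ) (v : V) :
    G.dv (f + g) v = G.dv f v + G.dv g v := by
  simp [dv, add_mul, Finset.sum_add_distrib]

lemma dv_sub (G : Multigraph V E) (f g : E → ℤ) (v : V) :
    G.dv (f - g) v = G.dv f v - G.dv g v := by
  simp [dv, sub_mul, Finset.sum_sub_distrib]

lemma sum_ind (X : Finset V) (x : V) : ∑ v ∈ X, ind x v = if x ∈ X then 1 else 0 := by
  simp [ind]

lemma sum_dv (G : Multigraph V E) (f : E → ℤ) (X : Finset V) :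
    ∑ v ∈ X, G.dv f v =
      ∑ e, f e * ((if G.tg e ∈ X then 1 else 0) - (if G.sr e ∈ X then 1 else 0)) := by
  unfold dv
  rw [Finset.sum_comm]
  refine Finset.sum_congr rfl fun e _ => ?_
  rw [← Finset.mul_sum, Finset.sum_sub_distrib, sum_ind, sum_ind]

/-- step relation with admissible signed edges -/
def Stp (G : Multigraph V E) (A : E → ℤ → Prop) (x y : V) (e : E) (ε : ℤ) : Prop :=
  A e ε ∧ ((ε = 1 ∧ x = G.sr e ∧ y = G.tg e) ∨ (ε = -1 ∧ x = G.tg e ∧ y = G.sr e))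

/-- admissible chain -/
def SC (G : Multigraph V E) (A : E → ℤ → Prop) : V → V → List (V × E) → Prop
  | x, y, [] => x = y
  | x, y, (v, e) :: rest => v = x ∧ ∃ w ε, G.Stp A x w e ε ∧ G.SC A w y rest

lemma SC_append (G : Multigraph V E) (A : E → ℤ → Prop) {x y : V} {p q : List (V × E)} :
    G.SC A x y (p ++ q) ↔ ∃ z, G.SC A x z p ∧ G.SC A z y q := by
  induction p generalizing x with
  | nil => simp [SC]
  | cons a t ih =>
    obtain ⟨u, e⟩ := a
    simp only [List.cons_append, SC, ih]
    constructor
    · rintro ⟨h, w, ε, h1, z, h2, h3⟩; exact ⟨z, ⟨h, w, ε, h1, h2⟩, h3⟩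
    · rintro ⟨z, ⟨h, w, ε, h1, h2⟩, h3⟩; exact ⟨h, w, ε, h1, z, h2, h3⟩

lemma Stp_ends (G : Multigraph V E) {A : E → ℤ → Prop} {x y : V} {e : E} {ε : ℤ}
    (h : G.Stp A x y e ε) : G.ends e = s(x, y) := by
  rw [ends_eq]
  rcases h.2 with ⟨_, rfl, rfl⟩ | ⟨_, rfl, rfl⟩
  · rfl
  · exact Sym2.eq_swap

lemma SC_chain (G : Multigraph V E) {A : E → ℤ → Prop} {x y : V} {p : List (V × E)}
    (h : G.SC A x y p) : G.IsChain x y p := by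
  induction p generalizing x with
  | nil => exact h
  | cons a t ih =>
    obtain ⟨u, e⟩ := a
    obtain ⟨h1, w, ε, h2, h3⟩ := h
    exact ⟨h1, w, G.Stp_ends h2, ih h3⟩

lemma simple_nodup (G : Multigraph V E) {x y : V} {p : List (V × E)}
    (h : G.IsChain x y p) (hn : (p.map Prod.fst).Nodup) (hy : y ∉ p.map Prod.fst) :
    (p.map Prod.snd).Nodup := by
  induction p generalizing x with
  | nil => simp
  | cons a t ih =>
    obtain ⟨u, e⟩ := a
    obtain ⟨rfl, w, hw, hc⟩ := h
    simp only [List.map_cons, List.nodup_cons, List.mem_cons, not_or] at hn hy ⊢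
    refine ⟨?_, ih hc hn.2 hy.2⟩
    intro he
    have := (chain_ends G (insert y (t.map Prod.fst).toFinset) hc (by
      intro z hz; simpa only [Finset.mem_insert, List.mem_toFinset] using hz)).2 e he u
      (by rw [hw]; simp)
    simp only [Finset.mem_insert, List.mem_toFinset] at this
    rcases this with h | h
    · exact hy.1 h.symm
    · exact hn.1 h

lemma SC_chi (G : Multigraph V E) {A : E → ℤ → Prop} {x y : V} {p : List (V × E)}
    (h : G.SC A x y p) (hn : (p.map Prod.snd).Nodup) :
    ∃ χ : E → ℤ, (∀ v, G.dv χ v = ind y v - ind x v) ∧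
      (∀ e, e ∈ p.map Prod.snd → A e (χ e) ∧ (χ e = 1 ∨ χ e = -1)) ∧
      (∀ e, e ∉ p.map Prod.snd → χ e = 0) := by
  induction p generalizing x with
  | nil =>
    obtain rfl : x = y := h
    exact ⟨0, by simp [dv], by simp, by simp⟩
  | cons a t ih =>
    obtain ⟨u, e⟩ := a
    obtain ⟨rfl, w, ε, h2, h3⟩ := h
    simp only [List.map_cons, List.nodup_cons] at hn
    obtain ⟨χ, c1, c2, c3⟩ := ih h3 hn.2
    refine ⟨χ + Pi.single e ε, ?_, ?_, ?_⟩
    · intro v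
      rw [dv_add, c1]
      have : G.dv (Pi.single e ε) v = ind w v - ind u v := by
        unfold dv
        rw [Finset.sum_eq_single e]
        · rcases h2.2 with ⟨rfl, rfl, rfl⟩ | ⟨rfl, rfl, rfl⟩ <;> simp
        · intro b _ hb; simp [hb]
        · simp
      rw [this]; ring
    · intro e' he'
      by_cases hee : e' = e
      · subst hee
        simp only [Pi.add_apply, c3 _ hn.1, Pi.single_eq_same, zero_add]
        exact ⟨h2.1, by rcases h2.2 with h | h <;> simp [h.1]⟩
      · simp only [List.map_cons, List.mem_cons, hee, false_or] at he'
        simpa [hee] using c2 e' he'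
    · intro e' he'
      simp only [List.map_cons, List.mem_cons, not_or] at he'
      simp [he'.1, c3 e' he'.2]

lemma path_or_cut (G : Multigraph V E) (A : E → ℤ → Prop) (a b : V) :
    (∃ (p : List (V × E)) (χ : E → ℤ), G.IsTtrail a b p ∧
      (∀ v, G.dv χ v = ind b v - ind a v) ∧
      (∀ e, e ∈ p.map Prod.snd → A e (χ e) ∧ (χ e = 1 ∨ χ e = -1)) ∧
      (∀ e, e ∉ p.map Prod.snd → χ e = 0)) ∨
    (∃ X : Finset V, a ∈ X ∧ b ∉ X ∧ ∀ e, (G.sr e ∈ X → G.tg e ∉ X → ¬ A e 1) ∧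
      (G.tg e ∈ X → G.sr e ∉ X → ¬ A e (-1))) := by
  classical
  let R : V → Prop := fun y => ∃ p, G.SC A a y p ∧ (p.map Prod.fst).Nodup ∧ y ∉ p.map Prod.fst
  have hstep : ∀ y w e ε, R y → G.Stp A y w e ε → R w := by
    rintro y w e ε ⟨p, h1, h2, h3⟩ hs
    by_cases hw : w ∈ p.map Prod.fst
    · obtain ⟨⟨w', e'⟩, hm, hw'⟩ := List.mem_map.mp hw
      simp only at hw'
      subst hw'
      obtain ⟨q, r, rfl⟩ := List.append_of_mem hm
      obtain ⟨z, hz1, hz2⟩ := (SC_append G A).1 h1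
      obtain ⟨rfl, -⟩ := hz2
      refine ⟨q, hz1, ?_, ?_⟩
      · rw [List.map_append] at h2; exact h2.of_append_left
      · rw [List.map_append, List.map_cons] at h2
        intro hq
        exact (List.disjoint_of_nodup_append h2) hq (by simp)
    · by_cases hwy : w = y
      · subst hwy; exact ⟨p, h1, h2, h3⟩
      · refine ⟨p ++ [(y, e)], (SC_append G A).2 ⟨y, h1, rfl, w, ε, hs, rfl⟩, ?_, ?_⟩
        · rw [List.map_append, List.nodup_append]
          refine ⟨h2, by simp, ?_⟩
          intro u hu u' hu'
          simp at hu'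
          rintro rfl
          subst hu'
          exact h3 hu
        · rw [List.map_append, List.mem_append]
          rintro (h | h)
          · exact hw h
          · simp at h; exact hwy h
  by_cases hb : R b
  · left
    obtain ⟨p, h1, h2, h3⟩ := hb
    have hn := simple_nodup G (SC_chain G h1) h2 h3
    obtain ⟨χ, hχ⟩ := SC_chi G h1 hn
    exact ⟨p, χ, ⟨SC_chain G h1, hn⟩, hχ⟩
  · right
    refine ⟨Finset.univ.filter R, by simp only [Finset.mem_filter_univ]; exact ⟨[], rfl, by simp, by simp⟩, by simpa using hb, ?_⟩
    intro e
    simp only [Finset.mem_filter_univ]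
    exact ⟨fun h1 h2 h3 => h2 (hstep _ _ e 1 h1 ⟨h3, Or.inl ⟨rfl, rfl, rfl⟩⟩),
      fun h1 h2 h3 => h2 (hstep _ _ e (-1) h1 ⟨h3, Or.inr ⟨rfl, rfl, rfl⟩⟩)⟩

open Classical in
/-- the edges of `F` in the cut of `X` -/
noncomputable def cutF (G : Multigraph V E) (F : Finset E) (X : Finset V) : Finset E :=
  F.filter (G.Crs X)

lemma flow_sum (G : Multigraph V E) {f : E → ℤ} {n : ℤ} {a b : V} {X : Finset V}
    (hf : ∀ v, G.dv f v = n * (ind b v - ind a v)) (ha : a ∈ X) (hb : b ∉ X) :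
    ∑ e, f e * ((if G.sr e ∈ X then 1 else 0) - (if G.tg e ∈ X then 1 else 0)) = n := by
  have h := sum_dv G f X
  simp only [hf] at h
  rw [← Finset.mul_sum, Finset.sum_sub_distrib, sum_ind, sum_ind, if_neg hb, if_pos ha] at h
  have : ∑ e, f e * ((if G.sr e ∈ X then (1:ℤ) else 0) - (if G.tg e ∈ X then 1 else 0)) =
    - ∑ e, f e * ((if G.tg e ∈ X then 1 else 0) - (if G.sr e ∈ X then 1 else 0)) := by
    rw [← Finset.sum_neg_distrib]
    exact Finset.sum_congr rfl fun e _ => by ring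
  rw [this, ← h]; ring

lemma exists_flow (G : Multigraph V E) (F : Finset E) (a b : V) (k : ℕ)
    (hcut : ∀ X : Finset V, a ∈ X → b ∉ X → k ≤ (G.cutF F X).card) (n : ℕ) (hn : n ≤ k) :
    ∃ f : E → ℤ, (∀ e, |f e| ≤ if e ∈ F then 1 else 0) ∧
      ∀ v, G.dv f v = n * (ind b v - ind a v) := by
  classical
  induction n with
  | zero => exact ⟨0, by intro e; split_ifs <;> simp, by simp [dv]⟩
  | succ n ih =>
    obtain ⟨f, hf, hd⟩ := ih (by omega)
    rcases path_or_cut G (fun e ε => |f e + ε| ≤ if e ∈ F then 1 else 0) a b with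
      ⟨p, χ, -, c1, c2, c3⟩ | ⟨X, ha, hb, hX⟩
    · refine ⟨f + χ, ?_, ?_⟩
      · intro e
        by_cases he : e ∈ p.map Prod.snd
        · exact (c2 e he).1
        · simpa [c3 e he] using hf e
      · intro v
        rw [dv_add, hd, c1]; push_cast; ring
    · exfalso
      have h1 := flow_sum G hd ha hb
      have h2 := hcut X ha hb
      have h3 : ∑ e, f e * ((if G.sr e ∈ X then (1:ℤ) else 0) - (if G.tg e ∈ X then 1 else 0))
          = ((G.cutF F X).card : ℤ) := by
        rw [Finset.card_eq_sum_ones, cutF, Finset.sum_filter, ← Finset.sum_subset (Finset.subset_univ F)]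
        · push_cast
          refine Finset.sum_congr rfl fun e he => ?_
          have hc := crs_iff G X e (ends_eq G e)
          have hX1 := hX e
          have hfe := hf e
          simp only [he, if_true, abs_le] at hX1 hfe
          by_cases hs : G.sr e ∈ X <;> by_cases ht : G.tg e ∈ X <;>
            simp [hs, ht, hc] at hX1 ⊢ <;> omega
        · intro e _ he
          have hfe := hf e
          simp only [he, if_false] at hfe
          rw [abs_nonpos_iff.mp hfe]; simp
      rw [h1] at h3
      have : n = (G.cutF F X).card := by exact_mod_cast h3
      omega

lemma decompose (G : Multigraph V E) (a b : V) (n : ℕ) (f : E → ℤ)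
    (hf1 : ∀ e, |f e| ≤ 1) (hd : ∀ v, G.dv f v = n * (ind b v - ind a v)) :
    ∃ P : Fin n → List (V × E), (∀ i, G.IsTtrail a b (P i)) ∧
      (∀ i, ∀ e ∈ (P i).map Prod.snd, f e ≠ 0) ∧ ∀ i j, i ≠ j → EdgeDisjoint (P i) (P j) := by
  induction n generalizing f with
  | zero => exact ⟨fun i => i.elim0, fun i => i.elim0, fun i => i.elim0, fun i => i.elim0⟩
  | succ n ih =>
    rcases path_or_cut G (fun e ε => f e = ε) a b with
      ⟨p, χ, ht, c1, c2, c3⟩ | ⟨X, ha, hb, hX⟩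
    · obtain ⟨P, h1, h2, h3⟩ := ih (f - χ) (by
        intro e
        by_cases he : e ∈ p.map Prod.snd
        · simp [(c2 e he).1]
        · simpa [c3 e he] using hf1 e) (by
        intro v; rw [dv_sub, hd, c1]; push_cast; ring)
      have key : ∀ i, ∀ e ∈ (P i).map Prod.snd, e ∉ p.map Prod.snd := by
        intro i e he hp
        apply h2 i e he
        simp [(c2 e hp).1]
      refine ⟨Fin.cons p P, ?_, ?_, ?_⟩
      · intro i; refine Fin.cases ?_ ?_ i
        · exact ht
        · exact h1
      · intro i; refine Fin.cases ?_ ?_ i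
        · intro e he
          have := c2 e he
          rcases this.2 with h | h <;> rw [this.1, h] <;> norm_num
        · intro i e he
          have h4 := h2 i e he
          have h5 := c3 e (key i e he)
          simpa [h5] using h4
      · intro i j
        refine Fin.cases ?_ ?_ i <;> refine Fin.cases ?_ ?_ j
        · simp
        · intro j _ e he hj; exact key j e hj he
        · intro j _ e he hj; exact key j e he hj
        · intro j i hij; exact h3 i j (by rintro rfl; exact hij rfl)
    · exfalso
      have h1 := flow_sum G hd ha hb
      have h2 : ∑ e, f e * ((if G.sr e ∈ X then (1:ℤ) else 0) - (if G.tg e ∈ X then 1 else 0))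
          ≤ 0 := by
        refine Finset.sum_nonpos fun e _ => ?_
        have hX1 := hX e
        have := hf1 e
        rw [abs_le] at this
        by_cases hs : G.sr e ∈ X <;> by_cases ht : G.tg e ∈ X <;>
            simp [hs, ht] at hX1 ⊢ <;> omega
      rw [h1] at h2
      push_cast at h2
      omega

theorem menger (G : Multigraph V E) (F : Finset E) (a b : V) (k : ℕ)
    (hcut : ∀ X : Finset V, a ∈ X → b ∉ X → k ≤ (G.cutF F X).card) :
    ∃ P : Fin k → List (V × E), (∀ i, G.IsTtrail a b (P i)) ∧
      (∀ i, ∀ e ∈ (P i).map Prod.snd, e ∈ F) ∧ ∀ i j, i ≠ j → EdgeDisjoint (P i) (P j) := by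
  obtain ⟨f, hf, hd⟩ := exists_flow G F a b k hcut k le_rfl
  obtain ⟨P, h1, h2, h3⟩ := decompose G a b k f (fun e => (hf e).trans (by split_ifs <;> simp)) hd
  refine ⟨P, h1, ?_, h3⟩
  intro i e he
  by_contra hF
  have := hf e
  simp only [hF, if_false] at this
  exact h2 i e he (abs_nonpos_iff.mp this)

lemma mem_cutF (G : Multigraph V E) (F : Finset E) (X : Finset V) (e : E) :
    e ∈ G.cutF F X ↔ e ∈ F ∧ G.Crs X e := by
  classical
  simp [cutF]

lemma cut_of_kconn (G : Multigraph V E) {k : ℕ} {a b : V} (h : G.KConn k a b) (X : Finset V)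
    (hX : ¬ (a ∈ X ↔ b ∈ X)) : k ≤ (G.cutF Finset.univ X).card := by
  rcases h with rfl | ⟨p, h1, h2⟩
  · tauto
  · have : ∀ i, ∃ e ∈ (p i).map Prod.snd, G.Crs X e := fun i =>
      chain_crs G X (h1 i).1 b (Or.inl rfl) hX
    choose g hg1 hg2 using this
    have hinj : Function.Injective g := by
      intro i j hij
      by_contra hne
      exact h2 i j hne (g i) (hg1 i) (hij ▸ hg1 j)
    have h3 := Finset.card_le_card (s := Finset.univ.image g) (t := G.cutF Finset.univ X) (by
      intro e he
      simp only [Finset.mem_image, Finset.mem_univ, true_and] at he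
      obtain ⟨i, rfl⟩ := he
      exact (mem_cutF _ _ _ _).2 ⟨Finset.mem_univ _, hg2 i⟩)
    rwa [Finset.card_image_of_injective _ hinj, Finset.card_univ, Fintype.card_fin] at h3

lemma cut_of_not_kconn (G : Multigraph V E) {a b : V} (h : ¬ G.KConn 3 a b) :
    ∃ X : Finset V, a ∈ X ∧ b ∉ X ∧ (G.cutF Finset.univ X).card ≤ 2 := by
  by_contra hne
  push Not at hne
  obtain ⟨P, h1, _, h3⟩ := menger G Finset.univ a b 3 (fun X ha hb => hne X ha hb)
  exact h (Or.inr ⟨P, h1, h3⟩)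

lemma union_good (G : Multigraph V E) (T : Finset V) {u w : V} {p : List (V × E)}
    (hc : G.IsChain u w p)
    (hg : ∀ z, (z = w ∨ z ∈ p.map Prod.fst) →
      ∃ Y : Finset V, z ∈ Y ∧ Disjoint Y T ∧ (G.cutF Finset.univ Y).card ≤ 2) :
    ∃ Y : Finset V, (∀ z, (z = w ∨ z ∈ p.map Prod.fst) → z ∈ Y) ∧ Disjoint Y T ∧
      (G.cutF Finset.univ Y).card ≤ 2 := by
  induction p generalizing u with
  | nil =>
    obtain ⟨Y, h1, h2, h3⟩ := hg w (Or.inl rfl)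
    exact ⟨Y, by simpa using h1, h2, h3⟩
  | cons c t ih =>
    obtain ⟨u', e⟩ := c
    have hc0 := hc
    obtain ⟨rfl, u2, hu2, hc'⟩ := hc
    have hsub : ∀ z, (z = w ∨ z ∈ t.map Prod.fst) →
        (z = w ∨ z ∈ ((u', e) :: t).map Prod.fst) := by
      intro z hz
      rw [List.map_cons, List.mem_cons]; tauto
    obtain ⟨X, hX1, hX2, hX3⟩ := ih hc' (fun z hz => hg z (hsub z hz))
    obtain ⟨Y, hY1, hY2, hY3⟩ := hg u' (Or.inr (by simp))
    by_cases hu : u' ∈ X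
    · refine ⟨X, ?_, hX2, hX3⟩
      intro z hz
      rw [List.map_cons, List.mem_cons] at hz
      rcases hz with h | h | h
      · exact hX1 z (Or.inl h)
      · rw [h]; exact hu
      · exact hX1 z (Or.inr h)
    by_cases hall : ∀ z, (z = w ∨ z ∈ ((u', e) :: t).map Prod.fst) → z ∈ Y
    · exact ⟨Y, hall, hY2, hY3⟩
    push Not at hall
    obtain ⟨z, hz, hzY⟩ := hall
    obtain ⟨g, hg1, hg2⟩ := chain_crs G Y hc0 z hz (by tauto)
    have hXY : ∀ z, (z = w ∨ z ∈ ((u', e) :: t).map Prod.fst) → z ∈ X ∪ Y := by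
      intro z hz
      rw [List.map_cons, List.mem_cons] at hz
      rw [Finset.mem_union]
      rcases hz with h | h | h
      · exact Or.inl (hX1 z (Or.inl h))
      · right; rw [h]; exact hY1
      · exact Or.inl (hX1 z (Or.inr h))
    refine ⟨X ∪ Y, hXY, Finset.disjoint_union_left.2 ⟨hX2, hY2⟩, ?_⟩
    have hends := (chain_ends G (X ∪ Y) hc0 hXY).2
    have hu2X : u2 ∈ X := (chain_ends G X hc' hX1).1
    have heX : e ∈ G.cutF Finset.univ X :=
      (mem_cutF _ _ _ _).2 ⟨Finset.mem_univ _, (crs_iff G X e hu2).2 (by tauto)⟩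
    have hgY : g ∈ G.cutF Finset.univ Y := (mem_cutF _ _ _ _).2 ⟨Finset.mem_univ _, hg2⟩
    have hnot : ∀ g ∈ ((u', e) :: t).map Prod.snd, ¬ G.Crs (X ∪ Y) g := by
      rintro g hg ⟨x, y, h1, h2, h3⟩
      exact h3 (hends g hg y (by rw [h1]; simp))
    have hss : G.cutF Finset.univ (X ∪ Y) ⊆
        (G.cutF Finset.univ X).erase e ∪ (G.cutF Finset.univ Y).erase g := by
      intro q hq
      have hq' := ((mem_cutF _ _ _ _).1 hq).2
      have hqe : q ≠ e := by rintro rfl; exact hnot q (by simp) hq'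
      have hqg : q ≠ g := by rintro rfl; exact hnot q hg1 hq'
      obtain ⟨x, y, h1, h2, h3⟩ := hq'
      rw [Finset.mem_union] at h2 h3
      rw [Finset.mem_union, Finset.mem_erase, Finset.mem_erase, mem_cutF, mem_cutF,
        crs_iff G X q h1, crs_iff G Y q h1]
      have := Finset.mem_univ q
      tauto
    have h4 := (Finset.card_le_card hss).trans (Finset.card_union_le _ _)
    rw [Finset.card_erase_of_mem heX, Finset.card_erase_of_mem hgY] at h4
    omega

lemma short_cut (G : Multigraph V E) {a b : V} {s : List (V × E)} (hab : a ≠ b)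
    (hs : G.ShortW a b s) (X : Finset V) (ha : a ∈ X) (hb : b ∉ X) :
    2 ≤ (G.cutF (Finset.univ \ (s.map Prod.snd).toFinset) X).card := by
  obtain ⟨⟨hc, hn⟩, hk, hi⟩ := hs
  set F := Finset.univ \ (s.map Prod.snd).toFinset with hF
  by_contra hlt
  push Not at hlt
  have hmF : ∀ g, g ∈ F ↔ g ∉ s.map Prod.snd := by
    intro g; simp only [hF, Finset.mem_sdiff, Finset.mem_univ, true_and, List.mem_toFinset]
  -- enough: a cut inside `cutF F X ∪ {e}`
  have main : ∀ (X' : Finset V) (e : E), a ∈ X' → b ∉ X' →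
      (∀ g, G.Crs X' g → g ≠ e → g ∈ F ∧ G.Crs X g) → False := by
    intro X' e h1 h2 h3
    have h4 := cut_of_kconn G hk X' (by tauto)
    have h5 := Finset.card_le_card (s := G.cutF Finset.univ X') (t := insert e (G.cutF F X)) (by
      intro g hg
      rw [mem_cutF] at hg
      rw [Finset.mem_insert, mem_cutF]
      by_cases h : g = e
      · exact Or.inl h
      · exact Or.inr (h3 g hg.2 h))
    have h6 := Finset.card_insert_le e (G.cutF F X)
    omega
  cases s with
  | nil => exact hab hc
  | cons c t =>
    obtain ⟨a', e⟩ := c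
    obtain ⟨rfl, u, hu, hct⟩ := hc
    rcases List.eq_nil_or_concat t with rfl | ⟨t', c', rfl⟩
    · refine main X e ha hb fun g hg hge => ⟨(hmF g).2 ?_, hg⟩
      simpa using hge
    · obtain ⟨w, e'⟩ := c'
      rw [List.concat_eq_append] at *
      obtain ⟨w', hct1, rfl, b', hb', hbb⟩ := (isChain_append G).1 hct
      obtain rfl : b' = b := hbb
      have hinner : ∀ z, (z = w ∨ z ∈ t'.map Prod.fst) → ¬ G.KConn 3 z a' := by
        intro z hz
        apply hi
        simp only [List.map_cons, List.tail_cons, List.map_append, List.mem_append, List.map_nil,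
          List.mem_singleton]
        tauto
      obtain ⟨Y, hY1, hY2, hY3⟩ := union_good G {a', b'} hct1 (by
        intro z hz
        obtain ⟨Y, h1, h2, h3⟩ := cut_of_not_kconn G (hinner z hz)
        refine ⟨Y, h1, ?_, h3⟩
        rw [Finset.disjoint_insert_right, Finset.disjoint_singleton_right]
        refine ⟨h2, fun h4 => ?_⟩
        have := cut_of_kconn G hk Y (by tauto)
        omega)
      rw [Finset.disjoint_insert_right, Finset.disjoint_singleton_right] at hY2
      obtain ⟨haY, hbY⟩ := hY2
      obtain ⟨huY, hends⟩ := chain_ends G Y hct1 hY1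
      have hwY : w ∈ Y := hY1 w (Or.inl rfl)
      have hee : e ≠ e' := by
        rintro rfl
        simp at hn
      have hcut : ∀ g, G.Crs Y g → g = e ∨ g = e' := by
        intro g hg
        have h1 : ({e, e'} : Finset E) ⊆ G.cutF Finset.univ Y := by
          intro q hq
          rw [Finset.mem_insert, Finset.mem_singleton] at hq
          rw [mem_cutF]
          refine ⟨Finset.mem_univ _, ?_⟩
          rcases hq with rfl | rfl
          · rw [crs_iff G Y q hu]; tauto
          · rw [crs_iff G Y q hb']; tauto
        have h2 := Finset.eq_of_subset_of_card_le h1 (by rw [Finset.card_pair hee]; exact hY3)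
        have h3 : g ∈ G.cutF Finset.univ Y := (mem_cutF _ _ _ _).2 ⟨Finset.mem_univ _, hg⟩
        rw [← h2] at h3
        simpa using h3
      refine main (X \ Y) e (Finset.mem_sdiff.2 ⟨ha, haY⟩)
        (fun h => hb (Finset.mem_sdiff.1 h).1) ?_
      rintro g ⟨x, y, hxy, hx, hy⟩ hge
      rw [Finset.mem_sdiff] at hx hy
      by_cases hyY : y ∈ Y
      · exfalso
        rcases hcut g ((crs_iff G Y g hxy).2 (by tauto)) with h | h
        · exact hge h
        · subst h
          rw [hxy] at hb'
          rcases Sym2.eq_iff.mp hb' with ⟨rfl, rfl⟩ | ⟨rfl, rfl⟩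
          · exact hx.2 hwY
          · exact hb hx.1
      · refine ⟨(hmF g).2 ?_, (crs_iff G X g hxy).2 (by tauto)⟩
        intro hg
        simp only [List.map_cons, List.map_append, List.mem_cons, List.mem_append, List.map_nil,
          List.not_mem_nil, or_false] at hg
        rcases hg with h | h | h
        · exact hge h
        · exact hyY (hends g h y (by rw [hxy]; simp))
        · subst h
          rw [hxy] at hb'
          rcases Sym2.eq_iff.mp hb' with ⟨rfl, rfl⟩ | ⟨rfl, rfl⟩
          · exact hx.2 hwY
          · exact hyY hwY

lemma short_two (G : Multigraph V E) {a b : V} {s : List (V × E)} (hab : a ≠ b)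
    (hs : G.ShortW a b s) : ∃ p₁ p₂ : List (V × E),
          G.IsTtrail a b p₁ ∧ G.IsTtrail a b p₂ ∧
          EdgeDisjoint s p₁ ∧ EdgeDisjoint s p₂ ∧ EdgeDisjoint p₁ p₂ := by
  obtain ⟨P, h1, h2, h3⟩ := menger G _ a b 2 (short_cut G hab hs)
  have h4 : ∀ i, EdgeDisjoint s (P i) := by
    intro i e he hp
    have := h2 i e hp
    simp only [Finset.mem_sdiff, Finset.mem_univ, true_and, List.mem_toFinset] at this
    exact this he
  exact ⟨P 0, P 1, h1 0, h1 1, h4 0, h4 1, h3 0 1 (by decide)⟩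

/-- auxiliary graph of short trails -/
def shortGraph (G : Multigraph V E) {m : ℕ} (v : Fin m → V) : SimpleGraph (Fin m) :=
  SimpleGraph.fromRel fun i j => ∃ s, G.ShortW (v i) (v j) s

lemma short_reach (G : Multigraph V E) (m : ℕ) (v : Fin m → V)
    (hinj : Function.Injective v)
    (hconn : ∀ i j, G.KConn 3 (v i) (v j))
    (hclass : ∀ w i, G.KConn 3 w (v i) → ∃ j, w = v j) (n : ℕ) :
    ∀ (p : List (V × E)) (i j : Fin m), p.length ≤ n → G.IsTtrail (v i) (v j) p →
      (G.shortGraph v).Reachable i j := by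
  induction n with
  | zero =>
    intro p i j hl hp
    obtain rfl : p = [] := List.length_eq_zero_iff.mp (by omega)
    obtain rfl : i = j := hinj hp.1
    rfl
  | succ n ih =>
    intro p i j hl hp
    by_cases hij : i = j
    · subst hij; rfl
    by_cases hsh : G.ShortW (v i) (v j) p
    · refine SimpleGraph.Adj.reachable ?_
      rw [shortGraph, SimpleGraph.fromRel_adj]
      exact ⟨hij, Or.inl ⟨p, hsh⟩⟩
    · have : ∃ w ∈ (p.map Prod.fst).tail, G.KConn 3 w (v i) := by
        by_contra hne
        push Not at hne
        exact hsh ⟨hp, hconn i j, hne⟩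
      obtain ⟨w, hw, hk⟩ := this
      obtain ⟨k, rfl⟩ := hclass w i hk
      cases p with
      | nil => simp at hw
      | cons c t =>
        simp only [List.map_cons, List.tail_cons] at hw
        obtain ⟨⟨w', e⟩, hm, hw'⟩ := List.mem_map.mp hw
        simp only at hw'
        subst hw'
        obtain ⟨q, r, rfl⟩ := List.append_of_mem hm
        rw [← List.cons_append] at hp
        obtain ⟨hc, hn⟩ := hp
        obtain ⟨z, hz1, hz2⟩ := (isChain_append G).1 hc
        have hz : v k = z := hz2.1
        subst hz
        rw [List.map_append] at hn
        simp only [List.length_cons, List.length_append] at hl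
        exact (ih (c :: q) i k (by simp; omega) ⟨hz1, hn.of_append_left⟩).trans
          (ih _ k j (by simp; omega) ⟨hz2, hn.of_append_right⟩)

lemma shortW_symm_pick (G : Multigraph V E) {m : ℕ} (v : Fin m → V) (x : Sym2 (Fin m))
    (hx : x ∈ (G.shortGraph v).edgeSet) :
    ∃ (i j : Fin m) (s : List (V × E)), x = s(i, j) ∧ i ≠ j ∧ G.ShortW (v i) (v j) s := by
  induction x using Sym2.ind with
  | _ i j =>
    rw [SimpleGraph.mem_edgeSet, shortGraph, SimpleGraph.fromRel_adj] at hx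
    obtain ⟨hne, ⟨s, hs⟩ | ⟨s, hs⟩⟩ := hx
    · exact ⟨i, j, s, rfl, hne, hs⟩
    · exact ⟨j, i, s, Sym2.eq_swap, hne.symm, hs⟩

end Multigraph

namespace Multigraph

variable {V E : Type*} [Fintype V] [Fintype E] [DecidableEq V] [DecidableEq E]


theorem stmt16 (G : Multigraph V E) (m : ℕ) (v : Fin m → V)
    (hinj : Function.Injective v)
    (hconn : ∀ i j, G.KConn 3 (v i) (v j))
    (hclass : ∀ w i, G.KConn 3 w (v i) → ∃ j, w = v j) :
    ∃ (s : Fin (m - 1) → List (V × E)) (a b : Fin (m - 1) → Fin m),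
      (∀ r, s r ≠ [] ∧ G.ShortW (v (a r)) (v (b r)) (s r)) ∧
      (∀ i j : Fin m, Relation.ReflTransGen
        (fun x y => ∃ r, (a r = x ∧ b r = y) ∨ (a r = y ∧ b r = x)) i j) ∧
      (∀ r, v (a r) ≠ v (b r) →
        ∃ p₁ p₂ : List (V × E),
          G.IsTtrail (v (a r)) (v (b r)) p₁ ∧
          G.IsTtrail (v (a r)) (v (b r)) p₂ ∧
          EdgeDisjoint (s r) p₁ ∧ EdgeDisjoint (s r) p₂ ∧ EdgeDisjoint p₁ p₂) := by
  classical
  rcases Nat.eq_zero_or_pos m with rfl | hm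
  · exact ⟨fun i => i.elim0, fun i => i.elim0, fun i => i.elim0, fun i => i.elim0,
      fun i => i.elim0, fun i => i.elim0⟩
  haveI : Nonempty (Fin m) := ⟨⟨0, hm⟩⟩
  have hcon : (G.shortGraph v).Connected := by
    rw [SimpleGraph.connected_iff]
    refine ⟨fun i j => ?_, inferInstance⟩
    rcases hconn i j with h | ⟨p, h1, -⟩
    · rw [hinj h]
    · exact short_reach G m v hinj hconn hclass _ (p 0) i j le_rfl (h1 0)
  obtain ⟨T, hT, hTree⟩ := hcon.exists_isTree_le
  have hcard := hTree.card_edgeFinset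
  rw [Fintype.card_fin] at hcard
  have hcard' : Fintype.card T.edgeSet = m - 1 := by
    rw [← SimpleGraph.edgeFinset_card]; omega
  let φ : Fin (m - 1) ≃ T.edgeSet := (Fintype.equivFinOfCardEq hcard').symm
  have hpick := fun r => shortW_symm_pick G v (φ r).1 (SimpleGraph.edgeSet_mono hT (φ r).2)
  choose a b s h1 h2 h3 using hpick
  refine ⟨s, a, b, ?_, ?_, ?_⟩
  · intro r
    refine ⟨?_, h3 r⟩
    intro hnil
    have h4 := (h3 r).1.1
    rw [hnil] at h4
    exact h2 r (hinj h4)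
  · intro i j
    have hr : T.Reachable i j := hTree.connected.preconnected i j
    rw [SimpleGraph.reachable_iff_reflTransGen] at hr
    refine Relation.ReflTransGen.mono ?_ _ _ hr
    intro x y hxy
    refine ⟨φ.symm ⟨s(x, y), hxy⟩, ?_⟩
    have h4 := h1 (φ.symm ⟨s(x, y), hxy⟩)
    rw [Equiv.apply_symm_apply] at h4
    rcases Sym2.eq_iff.mp h4 with ⟨h5, h6⟩ | ⟨h5, h6⟩
    · exact Or.inl ⟨h5.symm, h6.symm⟩
    · exact Or.inr ⟨h6.symm, h5.symm⟩
  · intro r hr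
    exact short_two G hr (h3 r)

end Multigraph
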